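/- Let 0 < δ ≤ 2^{−1622} and let θ_1 be a real number such that q²‖qθ_1‖ ≥ δ for every positive integer q. Then there exists a real number θ_2 such that for all integers A, B with max(|A|, |B|) > 0 one has ‖Aθ_1 − Bθ_2‖ · max(A², B²) ≥ δ; consequently inf_{q ∈ ℤ_{>0}} q^{1/2} max(‖qθ_1‖, ‖qθ_2‖) > 0. -/

import Mathlib

open Filter

/-- Distance from a real number to the nearest integer. -/
noncomputable def nint (x : ℝ) : ℝ := |x - round x|

/-!
The first inequality asks `θ₂` to avoid a neighbourhood of the ordinate at which each line
`A x - B y + C = 0` with `B ≠ 0` meets the vertical line `x = θ₁`; the second one asks it to avoid a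
neighbourhood of the ordinate of each rational point close to `x = θ₁`. Lines and points are sorted
into classes according to their heights, and `θ₂` is found in nested `R`-adic intervals, discarding
at each level the intervals that come near an ordinate of the corresponding classes.

The two families protect each other. If two points of a class were too close to each other, they
would lie on a common line of small height; if two lines of a class had nearly equal slopes and
ordinates, they would meet in a rational point of small denominator. But the surviving intervals
already avoid that line (when it is vertical, the hypothesis on `θ₁` excludes it) or that point. So
points of a class are separated, and in the plane with coordinates (ordinate, slope), boxes of size
`R ^ (-m) / X` times `R X ^ 2`, where `X = R ^ (k / 4)`, contain at most one line of class
`(m + k, k)`. An interval of level `m` therefore loses only `O(X ^ 3) = O(R ^ (3 k / 4))` of its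
`R ^ (k + 1)` descendants to these lines. Hence, for large `R`, the number of survivors of level `n`
is at least `(R / 2) ^ n`, and compactness yields `θ₂`.
-/

/-- The descendants of the node `b` of an `R`-ary tree that lie `k` levels further down, where
`D = R ^ k`: the nodes of each level are numbered by natural numbers in such a way that the parent
of `a` is `a / R`. -/
def block (D b : ℕ) : Finset ℕ := Finset.Ico (b * D) ((b + 1) * D)

lemma mem_block {D a b : ℕ} (hD : 0 < D) : a ∈ block D b ↔ a / D = b := by
  rw [block, Finset.mem_Ico]
  refine ⟨fun h => Nat.div_eq_of_lt_le h.1 h.2, ?_⟩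
  rintro rfl
  exact ⟨Nat.div_mul_le_self a D, Nat.lt_mul_of_div_lt (Nat.lt_succ_self _) hD⟩

lemma mem_biUnion_block {D a : ℕ} (hD : 0 < D) {s : Finset ℕ} :
    a ∈ s.biUnion (block D) ↔ a / D ∈ s := by
  simp only [Finset.mem_biUnion, mem_block hD, exists_eq_right']

lemma card_biUnion_block {D : ℕ} (hD : 0 < D) (s : Finset ℕ) :
    (s.biUnion (block D)).card = s.card * D := by
  rw [Finset.card_biUnion fun b _ b' _ hne => Finset.disjoint_left.2 fun a ha ha' =>
    hne (((mem_block hD).1 ha).symm.trans ((mem_block hD).1 ha'))]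
  simp only [block, Nat.card_Ico, add_one_mul, Nat.add_sub_cancel_left, Finset.sum_const,
    smul_eq_mul]

lemma block_bounds {D a b : ℕ} (ha : a ∈ block D b) : (b : ℝ) * D ≤ a ∧ (a : ℝ) + 1 ≤ (b + 1) * D :=
  ⟨mod_cast (Finset.mem_Ico.1 ha).1, mod_cast (Finset.mem_Ico.1 ha).2⟩

lemma abs_sub_le_of_mem_block {D a b : ℕ} (hD : 0 < D) (ha : a ∈ block D b) {x t : ℝ}
    (hx : |D * x - a| ≤ t) : |x - b| ≤ t / D + 1 := by
  have hD' : (0 : ℝ) < D := mod_cast hD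
  obtain ⟨h₁, h₂⟩ := block_bounds ha
  rw [abs_le] at hx ⊢
  rw [div_add_one hD'.ne', le_div_iff₀ hD', ← neg_div, div_le_iff₀ hD']
  constructor <;> linarith

open Classical in
/-- The nodes of level `n` of an `R`-ary tree that survive the removal, for all `k ≤ n`, of the
nodes `a` of level `n + 1` such that `Bad n k a`, together with their descendants. The index `k`
serves to charge the removal of `a` to its ancestor `k + 1` levels up. -/
noncomputable def survivors (R : ℕ) (Bad : ℕ → ℕ → ℕ → Prop) : ℕ → Finset ℕ
  | 0 => {0}
  | n + 1 => ((survivors R Bad n).biUnion (block R)).filter fun a => ∀ k ≤ n, ¬ Bad n k a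

section Survivors

variable {R : ℕ} {Bad : ℕ → ℕ → ℕ → Prop}

lemma mem_survivors_succ (hR : 0 < R) {n a : ℕ} :
    a ∈ survivors R Bad (n + 1) ↔ a / R ∈ survivors R Bad n ∧ ∀ k ≤ n, ¬ Bad n k a := by
  simp only [survivors, Finset.mem_filter, mem_biUnion_block hR]

lemma div_pow_mem_survivors (hR : 0 < R) {n i b : ℕ} (hb : b ∈ survivors R Bad (n + i)) :
    b / R ^ i ∈ survivors R Bad n := by
  induction i generalizing b with
  | zero => simpa only [pow_zero, Nat.div_one, add_zero] using hb
  | succ i ih =>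
    rw [pow_succ', ← Nat.div_div_eq_div_mul]
    exact ih ((mem_survivors_succ hR).1 hb).1

open Classical in
lemma card_survivors_mul_le (hR : 0 < R) {M : ℕ → ℝ}
    (hM : ∀ m k, ∀ b ∈ survivors R Bad m,
      (((block (R ^ (k + 1)) b).filter (Bad (m + k) k)).card : ℝ) ≤ M k) (n : ℕ) :
    (R : ℝ) * (survivors R Bad n).card ≤ (survivors R Bad (n + 1)).card +
      ∑ k ∈ Finset.range (n + 1), M k * (survivors R Bad (n - k)).card := by
  let removed (k : ℕ) : Finset ℕ := (survivors R Bad (n - k)).biUnion fun b =>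
    (block (R ^ (k + 1)) b).filter (Bad n k)
  have hcover : (survivors R Bad n).biUnion (block R) ⊆
      survivors R Bad (n + 1) ∪ (Finset.range (n + 1)).biUnion removed := by
    intro a ha
    rw [mem_biUnion_block hR] at ha
    rw [Finset.mem_union, mem_survivors_succ hR, or_iff_not_imp_left]
    intro hnot
    push Not at hnot
    obtain ⟨k, hk, hbad⟩ := hnot ha
    rw [← Nat.sub_add_cancel hk] at ha
    have hanc := div_pow_mem_survivors hR ha
    rw [Nat.div_div_eq_div_mul, ← pow_succ'] at hanc
    exact Finset.mem_biUnion.2 ⟨k, Finset.mem_range_succ_iff.2 hk, Finset.mem_biUnion.2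
      ⟨_, hanc, Finset.mem_filter.2 ⟨(mem_block (by positivity)).2 rfl, hbad⟩⟩⟩
  have hremoved : ∀ k ∈ Finset.range (n + 1),
      ((removed k).card : ℝ) ≤ M k * (survivors R Bad (n - k)).card := by
    intro k hk
    calc ((removed k).card : ℝ)
        ≤ ∑ b ∈ survivors R Bad (n - k), (((block (R ^ (k + 1)) b).filter (Bad n k)).card : ℝ) :=
          mod_cast Finset.card_biUnion_le
      _ ≤ (survivors R Bad (n - k)).card • M k := Finset.sum_le_card_nsmul _ _ _ fun b hb => by
          simpa only [Nat.sub_add_cancel (Finset.mem_range_succ_iff.1 hk)] using hM (n - k) k b hb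
      _ = M k * (survivors R Bad (n - k)).card := by rw [nsmul_eq_mul, mul_comm]
  calc (R : ℝ) * (survivors R Bad n).card = ((survivors R Bad n).biUnion (block R)).card := by
        rw [card_biUnion_block hR, Nat.cast_mul, mul_comm]
    _ ≤ (survivors R Bad (n + 1)).card + ∑ k ∈ Finset.range (n + 1), ((removed k).card : ℝ) := by
        exact_mod_cast (Finset.card_le_card hcover).trans ((Finset.card_union_le _ _).trans
          (Nat.add_le_add_left Finset.card_biUnion_le _))
    _ ≤ _ := by gcongr with k hk; exact hremoved k hk

lemma pow_mul_le_of_forall_mul_le {u : ℕ → ℝ} {c : ℝ} (hc : 0 ≤ c) {m k : ℕ}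
    (h : ∀ i < m + k, c * u i ≤ u (i + 1)) : c ^ k * u m ≤ u (m + k) := by
  induction k with
  | zero => simp only [pow_zero, one_mul, add_zero, le_refl]
  | succ k ih =>
    calc c ^ (k + 1) * u m = c * (c ^ k * u m) := by ring
      _ ≤ c * u (m + k) := by gcongr; exact ih fun i hi => h i (by omega)
      _ ≤ u (m + (k + 1)) := h _ (by omega)

lemma mul_le_succ_of_mul_le_add_sum {u M : ℕ → ℝ} {r c : ℝ} (hc : 0 < c) (hM : ∀ k, 0 ≤ M k)
    (hu : ∀ n, 0 ≤ u n)
    (hrec : ∀ n, r * u n ≤ u (n + 1) + ∑ k ∈ Finset.range (n + 1), M k * u (n - k))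
    (hsum : ∀ n, ∑ k ∈ Finset.range (n + 1), M k / c ^ k ≤ r - c) (n : ℕ) :
    c * u n ≤ u (n + 1) := by
  induction n using Nat.strong_induction_on with
  | _ n ih =>
  have hloss : ∑ k ∈ Finset.range (n + 1), M k * u (n - k) ≤ (r - c) * u n := by
    calc ∑ k ∈ Finset.range (n + 1), M k * u (n - k)
        ≤ ∑ k ∈ Finset.range (n + 1), M k / c ^ k * u n := by
          refine Finset.sum_le_sum fun k hk => ?_
          have hkn : n - k + k = n := Nat.sub_add_cancel (Finset.mem_range_succ_iff.1 hk)
          have hpow : c ^ k * u (n - k) ≤ u n := by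
            have := pow_mul_le_of_forall_mul_le hc.le (m := n - k) (k := k)
              fun i hi => ih i (by omega)
            rwa [hkn] at this
          calc M k * u (n - k) = M k / c ^ k * (c ^ k * u (n - k)) := by field_simp
            _ ≤ M k / c ^ k * u n := by have := hM k; gcongr
      _ = (∑ k ∈ Finset.range (n + 1), M k / c ^ k) * u n := (Finset.sum_mul ..).symm
      _ ≤ (r - c) * u n := mul_le_mul_of_nonneg_right (hsum n) (hu n)
  linarith [hrec n]

open Classical in
lemma survivors_nonempty (hR : 0 < R) {M : ℕ → ℝ} {c : ℝ} (hc : 0 < c)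
    (hM : ∀ m k, ∀ b ∈ survivors R Bad m,
      (((block (R ^ (k + 1)) b).filter (Bad (m + k) k)).card : ℝ) ≤ M k)
    (hsum : ∀ n, ∑ k ∈ Finset.range (n + 1), M k / c ^ k ≤ R - c) (n : ℕ) :
    (survivors R Bad n).Nonempty := by
  have hM₀ : ∀ k, 0 ≤ M k := fun k =>
    (Nat.cast_nonneg _).trans (hM 0 k 0 (Finset.mem_singleton_self 0))
  have hgrowth := mul_le_succ_of_mul_le_add_sum hc hM₀ (fun n => Nat.cast_nonneg _)
    (card_survivors_mul_le hR hM) hsum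
  have hpos : (0 : ℝ) < (survivors R Bad n).card := by
    induction n with
    | zero => simp only [survivors, Finset.card_singleton, Nat.cast_one, zero_lt_one]
    | succ n ih => exact (mul_pos hc ih).trans_le (hgrowth n)
  exact Finset.card_pos.1 (mod_cast hpos)

lemma exists_forall_mem_survivors_abs_sub_le (hR : 0 < R)
    (h : ∀ n, (survivors R Bad n).Nonempty) :
    ∃ y : ℝ, ∀ n, ∃ b ∈ survivors R Bad n, |(R : ℝ) ^ n * y - b| ≤ 1 := by
  have hR' : (0 : ℝ) < R := mod_cast hR
  let cells (n : ℕ) : Set ℝ := ⋃ b ∈ survivors R Bad n, Set.Icc (b : ℝ) (b + 1)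
  let K (n : ℕ) : Set ℝ := (fun y => (R : ℝ) ^ n * y) ⁻¹' cells n
  have hcompact : ∀ n, IsCompact (K n) := fun n =>
    (Homeomorph.mulLeft₀ ((R : ℝ) ^ n) (by positivity)).isCompact_preimage.2
      ((survivors R Bad n).isCompact_biUnion fun _ _ => isCompact_Icc)
  have hanti : ∀ n, K (n + 1) ⊆ K n := by
    intro n y hy
    simp only [K, cells, Set.mem_preimage, Set.mem_iUnion, Set.mem_Icc, exists_prop] at hy ⊢
    obtain ⟨a, ha, hlo, hhi⟩ := hy
    obtain ⟨h₁, h₂⟩ := block_bounds ((mem_block hR).2 (rfl : a / R = a / R))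
    rw [pow_succ, mul_right_comm] at hlo hhi
    exact ⟨a / R, ((mem_survivors_succ hR).1 ha).1,
      le_of_mul_le_mul_right (h₁.trans hlo) hR', le_of_mul_le_mul_right (hhi.trans h₂) hR'⟩
  have hne : ∀ n, (K n).Nonempty := by
    intro n
    obtain ⟨b, hb⟩ := h n
    have hcancel : (R : ℝ) ^ n * (b / R ^ n) = b := by field_simp
    refine ⟨b / (R : ℝ) ^ n, Set.mem_biUnion hb ?_⟩
    simp only [hcancel, Set.left_mem_Icc, le_add_iff_nonneg_right, zero_le_one]
  obtain ⟨y, hy⟩ := IsCompact.nonempty_iInter_of_sequence_nonempty_isCompact_isClosed K hanti hne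
    (hcompact 0) fun n => (hcompact n).isClosed
  refine ⟨y, fun n => ?_⟩
  obtain ⟨b, hb, hlo, hhi⟩ := Set.mem_iUnion₂.1 (Set.mem_iInter.1 hy n)
  exact ⟨b, hb, abs_le.2 ⟨by linarith, by linarith⟩⟩

end Survivors

/-- The interval `[a, a + 1] / R ^ (n + 1)` is considered hit by the set `Z n k` if its left
endpoint is within `4 / R ^ (n + 1)` of that set. -/
def IsHit (R : ℕ) (Z : ℕ → ℕ → Set ℝ) (n k a : ℕ) : Prop :=
  ∃ z ∈ Z n k, |(R : ℝ) ^ (n + 1) * z - a| ≤ 4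

/-- The real number `y` is close to an interval `[b, b + 1] / R ^ m` that survives the removal of
all intervals hit by the sets `Z n k` with `n < m`. -/
def IsNearSurvivor (R : ℕ) (Z : ℕ → ℕ → Set ℝ) (m : ℕ) (y : ℝ) : Prop :=
  ∃ b ∈ survivors R (IsHit R Z) m, |(R : ℝ) ^ m * y - b| ≤ 2

section Hit

variable {R : ℕ} {Z : ℕ → ℕ → Set ℝ}

lemma IsNearSurvivor.one_lt_mul_abs_sub (hR : 0 < R) {m n k : ℕ} {y z : ℝ}
    (hy : IsNearSurvivor R Z m y) (hnm : n < m) (hk : k ≤ n) (hz : z ∈ Z n k) :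
    1 < (R : ℝ) ^ (n + 1) * |y - z| := by
  obtain ⟨b, hb, hyb⟩ := hy
  obtain ⟨i, rfl⟩ := Nat.exists_eq_add_of_le (Nat.succ_le_of_lt hnm)
  set a := b / R ^ i
  have hza : 4 < |(R : ℝ) ^ (n + 1) * z - a| := by
    by_contra! hle
    exact ((mem_survivors_succ hR).1 (div_pow_mem_survivors hR hb)).2 k hk ⟨z, hz, hle⟩
  have hya : |(R : ℝ) ^ (n + 1) * y - a| ≤ 3 := by
    have hRi : (1 : ℝ) ≤ (R ^ i : ℕ) := mod_cast Nat.one_le_pow _ _ hR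
    refine (abs_sub_le_of_mem_block (D := R ^ i) (t := 2) (by positivity)
      ((mem_block (by positivity)).2 rfl) ?_).trans ?_
    · convert hyb using 3
      rw [Nat.cast_pow, pow_add, Nat.succ_eq_add_one]
      ring
    · linarith [div_le_self zero_le_two hRi]
  have htri := abs_sub_le ((R : ℝ) ^ (n + 1) * z) (R ^ (n + 1) * y) a
  rw [← mul_sub, abs_mul, abs_pow, Nat.abs_cast, abs_sub_comm z y] at htri
  linarith

lemma card_le_of_forall_abs_sub_natCast_le {x : ℝ} {r : ℕ} {s : Finset ℕ}
    (h : ∀ a ∈ s, |x - a| ≤ r) : s.card ≤ 2 * r + 1 := by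
  rcases s.eq_empty_or_nonempty with rfl | hs
  · exact Nat.zero_le _
  have hsub : s ⊆ Finset.Icc (s.min' hs) (s.min' hs + 2 * r) := by
    intro a ha
    have hle : (a : ℝ) ≤ s.min' hs + 2 * r := by
      linarith [(abs_le.1 (h a ha)).1, (abs_le.1 (h _ (s.min'_mem hs))).2]
    exact Finset.mem_Icc.2 ⟨s.min'_le a ha, mod_cast hle⟩
  refine (Finset.card_le_card hsub).trans ?_
  rw [Nat.card_Icc]
  omega

open Classical in
lemma card_filter_isHit_le (hR : 4 ≤ R) {m k b N : ℕ}
    (h : ∀ s : Finset ℝ, (∀ z ∈ s, z ∈ Z (m + k) k ∧ |(R : ℝ) ^ m * z - b| ≤ 2) → s.card ≤ N) :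
    ((block (R ^ (k + 1)) b).filter (IsHit R Z (m + k) k)).card ≤ 9 * N := by
  set T := (block (R ^ (k + 1)) b).filter (IsHit R Z (m + k) k)
  have hhit : ∀ a ∈ T, ∃ z ∈ Z (m + k) k, |(R : ℝ) ^ (m + k + 1) * z - a| ≤ 4 :=
    fun a ha => (Finset.mem_filter.1 ha).2
  choose! z hzZ hza using hhit
  have hparent : ∀ a ∈ T, |(R : ℝ) ^ m * z a - b| ≤ 2 := by
    intro a ha
    have hRk : (4 : ℝ) ≤ (R ^ (k + 1) : ℕ) := mod_cast hR.trans (Nat.le_self_pow k.succ_ne_zero R)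
    refine (abs_sub_le_of_mem_block (D := R ^ (k + 1)) (t := 4) (by positivity)
      (Finset.mem_filter.1 ha).1 ?_).trans ?_
    · convert hza a ha using 3
      push_cast
      ring
    · linarith [div_le_one_of_le₀ hRk (by positivity)]
  have hfibre : T.card ≤ 9 * (T.image z).card := by
    refine Finset.card_le_mul_card_image T 9 fun w _ =>
      card_le_of_forall_abs_sub_natCast_le (x := (R : ℝ) ^ (m + k + 1) * w) (r := 4) fun a ha => ?_
    obtain ⟨haT, rfl⟩ := Finset.mem_filter.1 ha
    exact_mod_cast hza a haT
  refine hfibre.trans (Nat.mul_le_mul_left 9 (h _ fun w hw => ?_))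
  obtain ⟨a, ha, rfl⟩ := Finset.mem_image.1 hw
  exact ⟨hzZ a ha, hparent a ha⟩

lemma card_le_mul_of_one_le_abs_sub {ι : Type*} {s : Finset ι} {f g : ι → ℝ} {x y : ℝ} {M N : ℕ}
    (hf : ∀ i ∈ s, f i ∈ Set.Ico x (x + M)) (hg : ∀ i ∈ s, g i ∈ Set.Ico y (y + N))
    (hsep : ∀ i ∈ s, ∀ j ∈ s, i ≠ j → 1 ≤ |f i - f j| ∨ 1 ≤ |g i - g j|) : s.card ≤ M * N := by
  let cell (i : ι) : ℕ × ℕ := (⌊f i - x⌋₊, ⌊g i - y⌋₊)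
  have hfloor {t u : ℝ} {K : ℕ} (ht : t ∈ Set.Ico u (u + K)) : ⌊t - u⌋₊ < K :=
    (Nat.floor_lt (sub_nonneg.2 ht.1)).2 (sub_lt_iff_lt_add'.2 ht.2)
  have hmaps : Set.MapsTo cell s (Finset.range M ×ˢ Finset.range N : Finset (ℕ × ℕ)) := fun i hi =>
    Finset.mem_product.2
      ⟨Finset.mem_range.2 (hfloor (hf i hi)), Finset.mem_range.2 (hfloor (hg i hi))⟩
  have hclose {t t' u : ℝ} (ht : u ≤ t) (ht' : u ≤ t') (h : ⌊t - u⌋₊ = ⌊t' - u⌋₊) :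
      |t - t'| < 1 := by
    have h₁ := (Nat.floor_eq_iff (sub_nonneg.2 ht)).1 h
    have h₂ := (Nat.floor_eq_iff (sub_nonneg.2 ht')).1 rfl
    rw [abs_lt]
    constructor <;> linarith
  have hinj : Set.InjOn cell s := by
    intro i hi j hj hij
    obtain ⟨hfij, hgij⟩ := Prod.mk.inj hij
    by_contra hne
    rcases hsep i hi j hj hne with h | h
    · exact absurd h (not_le.2 (hclose (hf i hi).1 (hf j hj).1 hfij))
    · exact absurd h (not_le.2 (hclose (hg i hi).1 (hg j hj).1 hgij))
  simpa only [Finset.card_product, Finset.card_range] using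
    Finset.card_le_card_of_injOn cell hmaps hinj

end Hit

/-- The height of the lines `A x - B y + C = 0`. -/
noncomputable def height (A B : ℤ) : ℝ := max |(A : ℝ)| |(B : ℝ)|

lemma height_sq (A B : ℤ) : height A B ^ 2 = max ((A : ℝ) ^ 2) ((B : ℝ) ^ 2) := by
  rw [height, ← sq_abs (A : ℝ), ← sq_abs (B : ℝ)]
  exact (pow_left_monotoneOn.map_max (abs_nonneg (A : ℝ)) (abs_nonneg (B : ℝ)))

lemma height_neg (A B : ℤ) : height (-A) (-B) = height A B := by
  simp only [height, Int.cast_neg, abs_neg]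

lemma le_height (A B : ℤ) : (B : ℝ) ≤ height A B :=
  (le_abs_self _).trans (le_max_right _ _)

lemma abs_le_height (A B : ℤ) : |(A : ℝ)| ≤ height A B := le_max_left _ _

/-- The lines `A x - B y + C = 0` of class `(n, k)`: the first index measures `B * H ^ 2` and the
second one `H / B`, where `H` is the height. -/
structure IsLineOfClass (R : ℕ) (δ : ℝ) (n k : ℕ) (A B : ℤ) : Prop where
  pos : 0 < B
  le_mul_height_sq : δ * R ^ (n + 1) ≤ B * height A B ^ 2
  mul_height_sq_lt : B * height A B ^ 2 < δ * R ^ (n + 2)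
  mul_le_height : R ^ k * (B : ℝ) ≤ height A B
  height_lt_mul : height A B < R ^ (k + 1) * (B : ℝ)

/-- The rational points `(p / q, r / q)` of class `n` that are close to the vertical line
`x = θ`. -/
structure IsPointOfClass (R : ℕ) (δ θ : ℝ) (n : ℕ) (p q : ℤ) : Prop where
  pos : 0 < q
  le_cube : δ * R ^ (2 * n + 2) ≤ (q : ℝ) ^ 3
  cube_lt : (q : ℝ) ^ 3 < δ * R ^ (2 * n + 4)
  mul_sq_lt : q * (q * θ - p) ^ 2 < δ

/-- The ordinates of the intersections of the vertical line `x = θ` with the lines of class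
`(n, k)`. -/
def lineOrdinates (R : ℕ) (δ θ : ℝ) (n k : ℕ) : Set ℝ :=
  {z | ∃ A B C : ℤ, IsLineOfClass R δ n k A B ∧ B * z = A * θ + C}

/-- The ordinates of the rational points of class `n` that are close to the vertical line
`x = θ`. -/
def pointOrdinates (R : ℕ) (δ θ : ℝ) (n : ℕ) : Set ℝ :=
  {z | ∃ p r q : ℤ, IsPointOfClass R δ θ n p q ∧ q * z = r}

/-- The ordinates to be avoided; the points are accounted for at index `k = 0`. -/
def dangerous (R : ℕ) (δ θ : ℝ) (n k : ℕ) : Set ℝ :=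
  lineOrdinates R δ θ n k ∪ {z | k = 0 ∧ z ∈ pointOrdinates R δ θ n}

lemma exists_mul_pow_near {c x r : ℝ} (hr : 1 < r) (hc : 0 < c) (h : c ≤ x) :
    ∃ n : ℕ, c * r ^ n ≤ x ∧ x < c * r ^ (n + 1) := by
  obtain ⟨n, hle, hlt⟩ := exists_nat_pow_near ((one_le_div hc).2 h) hr
  exact ⟨n, (le_div_iff₀' hc).1 hle, (div_lt_iff₀' hc).1 hlt⟩

lemma lt_mul_of_pow_three_lt {x y r : ℝ} (hr : 1 ≤ r) (hy : 0 ≤ y)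
    (h : x ^ 3 < r ^ 2 * y ^ 3) : x < r * y := by
  refine lt_of_pow_lt_pow_left₀ 3 (by positivity) (h.trans_le ?_)
  rw [mul_pow]
  gcongr
  norm_num

lemma mul_pow_le_one {R : ℕ} {δ : ℝ} (hR : 0 < R) (hδ₀ : 0 < δ) {i j : ℕ}
    (hδ : δ * R ^ j ≤ 1) (hij : i ≤ j) : δ * R ^ i ≤ 1 := by
  have hR' : (1 : ℝ) ≤ R := mod_cast hR
  exact le_trans (by gcongr) hδ

section Avoidance

variable {R : ℕ} {δ θ : ℝ} {m : ℕ} {y : ℝ}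

lemma exists_isLineOfClass (hR : 1 < R) (hδ₀ : 0 < δ) (hδ : δ * R ^ 2 ≤ 1) {A B : ℤ}
    (hB : 0 < B) : ∃ n, ∃ k ≤ n, IsLineOfClass R δ n k A B := by
  have hR' : (1 : ℝ) < R := mod_cast hR
  have hB₁ : (1 : ℝ) ≤ B := mod_cast hB
  have hH : 1 ≤ height A B := hB₁.trans (le_height A B)
  have hHV : height A B ≤ B * height A B ^ 2 := by nlinarith
  obtain ⟨n, hnle, hnlt⟩ := exists_mul_pow_near (c := δ * R) (x := B * height A B ^ 2) hR'
    (by positivity) (by nlinarith)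
  obtain ⟨k, hkle, hklt⟩ := exists_mul_pow_near hR' (by linarith) (le_height A B)
  rw [mul_comm] at hkle hklt
  rw [mul_assoc, ← pow_succ'] at hnle hnlt
  have hkn : (R : ℝ) ^ k < R ^ n := by
    calc (R : ℝ) ^ k ≤ R ^ k * B := le_mul_of_one_le_right (by positivity) hB₁
      _ ≤ B * height A B ^ 2 := hkle.trans hHV
      _ < δ * R ^ (n + 2) := hnlt
      _ = δ * R ^ 2 * R ^ n := by ring
      _ ≤ 1 * R ^ n := by gcongr
      _ = R ^ n := one_mul _
  exact ⟨n, k, ((pow_lt_pow_iff_right₀ hR').1 hkn).le, hB, hnle, hnlt, hkle, hklt⟩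

lemma IsNearSurvivor.le_line_of_pos (hR : 1 < R) (hδ₀ : 0 < δ) (hδ : δ * R ^ 2 ≤ 1)
    (hy : IsNearSurvivor R (dangerous R δ θ) m y) {A B C : ℤ} (hB : 0 < B)
    (hm : B * height A B ^ 2 < δ * R ^ (m + 1)) :
    δ ≤ |A * θ - B * y + C| * height A B ^ 2 := by
  have hR' : (1 : ℝ) < R := mod_cast hR
  have hB' : (0 : ℝ) < B := mod_cast hB
  obtain ⟨n, k, hkn, hclass⟩ := exists_isLineOfClass hR hδ₀ hδ (A := A) hB
  have hnm : n < m := by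
    have h := (pow_lt_pow_iff_right₀ hR').1
      (lt_of_mul_lt_mul_left (hclass.le_mul_height_sq.trans_lt hm) hδ₀.le)
    omega
  obtain ⟨z, hz⟩ : ∃ z : ℝ, B * z = A * θ + C := ⟨_, mul_div_cancel₀ _ hB'.ne'⟩
  have hfar := hy.one_lt_mul_abs_sub (by omega) hnm hkn (Or.inl ⟨A, B, C, hclass, hz⟩)
  have hdist : A * θ - B * y + C = -(B * (y - z)) := by linear_combination -hz
  calc δ ≤ δ * (R ^ (n + 1) * |y - z|) := le_mul_of_one_le_right hδ₀.le hfar.le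
    _ = δ * R ^ (n + 1) * |y - z| := by ring
    _ ≤ B * height A B ^ 2 * |y - z| :=
        mul_le_mul_of_nonneg_right hclass.le_mul_height_sq (abs_nonneg _)
    _ = |A * θ - B * y + C| * height A B ^ 2 := by
        rw [hdist, abs_neg, abs_mul, abs_of_pos hB']
        ring

lemma IsNearSurvivor.le_line (hR : 1 < R) (hδ₀ : 0 < δ) (hδ : δ * R ^ 2 ≤ 1)
    (hy : IsNearSurvivor R (dangerous R δ θ) m y) {A B C : ℤ} (hB : B ≠ 0)
    (hm : |(B : ℝ)| * height A B ^ 2 < δ * R ^ (m + 1)) :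
    δ ≤ |A * θ - B * y + C| * height A B ^ 2 := by
  rcases lt_or_gt_of_ne hB with h | h
  · have h' : (B : ℝ) < 0 := mod_cast h
    rw [abs_of_neg h', ← height_neg] at hm
    have hneg := hy.le_line_of_pos hR hδ₀ hδ (A := -A) (B := -B) (C := -C) (by omega)
      (by exact_mod_cast hm)
    rw [height_neg, ← abs_neg] at hneg
    convert hneg using 3
    push_cast
    ring
  · rw [abs_of_pos (mod_cast h)] at hm
    exact hy.le_line_of_pos hR hδ₀ hδ h hm

lemma exists_isPointOfClass (hR : 1 < R) (hδ₀ : 0 < δ) (hδ : δ * R ^ 2 ≤ 1) {p q : ℤ}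
    (hq : 0 < q) (hp : q * (q * θ - p) ^ 2 < δ) : ∃ n, IsPointOfClass R δ θ n p q := by
  have hR' : (1 : ℝ) < R := mod_cast hR
  have hq₃ : (1 : ℝ) ≤ (q : ℝ) ^ 3 := one_le_pow₀ (mod_cast hq)
  obtain ⟨n, hle, hlt⟩ := exists_mul_pow_near (r := (R : ℝ) ^ 2) (c := δ * R ^ 2)
    (one_lt_pow₀ hR' two_ne_zero) (by positivity) (hδ.trans hq₃)
  refine ⟨n, hq, ?_, ?_, hp⟩
  · convert hle using 1
    ring
  · convert hlt using 1
    ring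

lemma IsNearSurvivor.le_point_of_pos (hR : 1 < R) (hδ₀ : 0 < δ) (hδ : δ * R ^ 2 ≤ 1)
    (hy : IsNearSurvivor R (dangerous R δ θ) m y) {p r q : ℤ} (hq : 0 < q)
    (hm : (q : ℝ) ^ 3 < δ * R ^ (2 * m + 2)) (hp : q * (q * θ - p) ^ 2 < δ) :
    δ ≤ q * (q * y - r) ^ 2 := by
  have hR' : (1 : ℝ) < R := mod_cast hR
  have hq' : (0 : ℝ) < q := mod_cast hq
  obtain ⟨n, hclass⟩ := exists_isPointOfClass hR hδ₀ hδ hq hp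
  have hnm : n < m := by
    have h := (pow_lt_pow_iff_right₀ hR').1
      (lt_of_mul_lt_mul_left (hclass.le_cube.trans_lt hm) hδ₀.le)
    omega
  obtain ⟨z, hz⟩ : ∃ z : ℝ, q * z = r := ⟨_, mul_div_cancel₀ _ hq'.ne'⟩
  have hfar := hy.one_lt_mul_abs_sub (by omega) hnm (Nat.zero_le n)
    (Or.inr ⟨rfl, p, r, q, hclass, hz⟩)
  calc δ ≤ δ * (R ^ (n + 1) * |y - z|) ^ 2 := le_mul_of_one_le_right hδ₀.le (one_le_pow₀ hfar.le)
    _ = δ * R ^ (2 * n + 2) * (y - z) ^ 2 := by rw [mul_pow, sq_abs]; ring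
    _ ≤ q ^ 3 * (y - z) ^ 2 := mul_le_mul_of_nonneg_right hclass.le_cube (sq_nonneg _)
    _ = q * (q * y - r) ^ 2 := by rw [← hz]; ring

lemma IsNearSurvivor.le_point (hR : 1 < R) (hδ₀ : 0 < δ) (hδ : δ * R ^ 2 ≤ 1)
    (hy : IsNearSurvivor R (dangerous R δ θ) m y) {p r q : ℤ} (hq : q ≠ 0)
    (hm : |(q : ℝ)| ^ 3 < δ * R ^ (2 * m + 2)) (hp : |(q : ℝ)| * (q * θ - p) ^ 2 < δ) :
    δ ≤ |(q : ℝ)| * (q * y - r) ^ 2 := by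
  rcases lt_or_gt_of_ne hq with h | h
  · have h' : (q : ℝ) < 0 := mod_cast h
    rw [abs_of_neg h'] at hm hp ⊢
    have hneg := hy.le_point_of_pos hR hδ₀ hδ (p := -p) (r := -r) (q := -q) (by omega)
      (by exact_mod_cast hm) (by push_cast; convert hp using 2; ring)
    convert hneg using 2 <;> push_cast <;> ring
  · rw [abs_of_pos (mod_cast h)] at hm hp ⊢
    exact hy.le_point_of_pos hR hδ₀ hδ h hm hp

end Avoidance

section LineGap

variable {R : ℕ} {δ θ : ℝ} {n m k : ℕ} {A B A₁ B₁ C₁ A₂ B₂ C₂ : ℤ} {X z₁ z₂ : ℝ}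

lemma IsLineOfClass.cast_pos (h : IsLineOfClass R δ n k A B) : (0 : ℝ) < B := mod_cast h.pos

lemma IsLineOfClass.height_pos (h : IsLineOfClass R δ n k A B) : 0 < height A B :=
  h.cast_pos.trans_le (le_height A B)

lemma IsLineOfClass.height_cube_lt (hR : 0 < R) (h : IsLineOfClass R δ n k A B) :
    height A B ^ 3 < δ * R ^ (n + k + 3) := by
  calc height A B ^ 3 = height A B * height A B ^ 2 := by ring
    _ ≤ R ^ (k + 1) * B * height A B ^ 2 :=
        mul_le_mul_of_nonneg_right h.height_lt_mul.le (sq_nonneg _)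
    _ = R ^ (k + 1) * (B * height A B ^ 2) := by ring
    _ < R ^ (k + 1) * (δ * R ^ (n + 2)) := mul_lt_mul_of_pos_left h.mul_height_sq_lt (by positivity)
    _ = δ * R ^ (n + k + 3) := by ring

lemma IsLineOfClass.le_height_cube (h : IsLineOfClass R δ n k A B) :
    δ * R ^ (n + k + 1) ≤ height A B ^ 3 := by
  calc δ * R ^ (n + k + 1) = R ^ k * (δ * R ^ (n + 1)) := by ring
    _ ≤ R ^ k * (B * height A B ^ 2) :=
        mul_le_mul_of_nonneg_left h.le_mul_height_sq (by positivity)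
    _ = R ^ k * B * height A B ^ 2 := by ring
    _ ≤ height A B * height A B ^ 2 := mul_le_mul_of_nonneg_right h.mul_le_height (sq_nonneg _)
    _ = height A B ^ 3 := by ring

lemma IsLineOfClass.height_lt_mul_height (hR : 0 < R) (h₁ : IsLineOfClass R δ n k A₁ B₁)
    (h₂ : IsLineOfClass R δ n k A₂ B₂) : height A₂ B₂ < R * height A₁ B₁ := by
  refine lt_mul_of_pow_three_lt (mod_cast hR) h₁.height_pos.le ?_
  calc height A₂ B₂ ^ 3 < δ * R ^ (n + k + 3) := h₂.height_cube_lt hR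
    _ = R ^ 2 * (δ * R ^ (n + k + 1)) := by ring
    _ ≤ R ^ 2 * height A₁ B₁ ^ 3 := by gcongr; exact h₁.le_height_cube

lemma IsLineOfClass.pow_four_mul_sq_le (hR : 0 < R) (h₁ : IsLineOfClass R δ n k A₁ B₁)
    (h₂ : IsLineOfClass R δ n k A₂ B₂) :
    height A₁ B₁ ^ 4 * height A₂ B₂ ^ 2 ≤ (δ * R ^ (n + k + 3)) ^ 2 := by
  have hmax : max (height A₁ B₁) (height A₂ B₂) ^ 3 ≤ δ * R ^ (n + k + 3) := by
    rcases max_choice (height A₁ B₁) (height A₂ B₂) with h | h <;> rw [h]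
    exacts [(h₁.height_cube_lt hR).le, (h₂.height_cube_lt hR).le]
  have hpos₁ := h₁.height_pos
  have hpos₂ := h₂.height_pos
  calc height A₁ B₁ ^ 4 * height A₂ B₂ ^ 2
      ≤ max (height A₁ B₁) (height A₂ B₂) ^ 4 * max (height A₁ B₁) (height A₂ B₂) ^ 2 := by
        gcongr
        exacts [le_max_left _ _, le_max_right _ _]
    _ = (max (height A₁ B₁) (height A₂ B₂) ^ 3) ^ 2 := by ring
    _ ≤ (δ * R ^ (n + k + 3)) ^ 2 := by gcongr

lemma IsLineOfClass.sq_lt (hR : 0 < R) (h : IsLineOfClass R δ (m + k) k A B) :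
    (B : ℝ) ^ 2 < δ * R ^ (m + 3) := by
  have hR' : (1 : ℝ) ≤ R := mod_cast hR
  have hB : (1 : ℝ) ≤ B := mod_cast h.pos
  refine lt_of_mul_lt_mul_right (a := ((R : ℝ) ^ k) ^ 2) ?_ (by positivity)
  calc (B : ℝ) ^ 2 * ((R : ℝ) ^ k) ^ 2 ≤ (B : ℝ) ^ 3 * ((R : ℝ) ^ k) ^ 3 := by
        gcongr
        · norm_num
        · exact one_le_pow₀ hR'
        · norm_num
    _ = ((R : ℝ) ^ k * B) ^ 3 := by ring
    _ ≤ height A B ^ 3 := by have := h.cast_pos; gcongr; exact h.mul_le_height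
    _ < δ * R ^ (m + k + k + 3) := h.height_cube_lt hR
    _ = δ * R ^ (m + 3) * (R ^ k) ^ 2 := by ring

lemma IsLineOfClass.four_mul_mul_lt (hR : 4 ≤ R) (hδ : δ * R ^ 4 ≤ 1)
    (h₁ : IsLineOfClass R δ (m + k) k A₁ B₁) (h₂ : IsLineOfClass R δ (m + k) k A₂ B₂) :
    4 * (B₁ * B₂ : ℝ) < R ^ m := by
  have hR' : (4 : ℝ) ≤ R := mod_cast hR
  have hprod : (B₁ * B₂ : ℝ) < δ * R ^ (m + 3) := by
    nlinarith [sq_nonneg ((B₁ : ℝ) - B₂), h₁.sq_lt (by omega), h₂.sq_lt (by omega)]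
  calc 4 * (B₁ * B₂ : ℝ) < R * (δ * R ^ (m + 3)) :=
        mul_lt_mul' hR' hprod (mul_pos h₁.cast_pos h₂.cast_pos).le (by linarith)
    _ = δ * R ^ 4 * R ^ m := by ring
    _ ≤ 1 * R ^ m := by gcongr
    _ = R ^ m := one_mul _

lemma det_mul_sub (hz₁ : B₁ * z₁ = A₁ * θ + C₁) (hz₂ : B₂ * z₂ = A₂ * θ + C₂) :
    ((A₁ * B₂ - A₂ * B₁ : ℤ) : ℝ) * θ - (C₂ * B₁ - C₁ * B₂ : ℤ) = B₁ * B₂ * (z₁ - z₂) := by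
  push_cast
  linear_combination (-B₂ : ℝ) * hz₁ + B₁ * hz₂

lemma det_mul_left_sub (hz₁ : B₁ * z₁ = A₁ * θ + C₁) (hz₂ : B₂ * z₂ = A₂ * θ + C₂) :
    ((A₁ * B₂ - A₂ * B₁ : ℤ) : ℝ) * z₁ - (A₁ * C₂ - A₂ * C₁ : ℤ) = A₁ * B₂ * (z₁ - z₂) := by
  push_cast
  linear_combination (-A₂ : ℝ) * hz₁ + A₁ * hz₂

lemma IsLineOfClass.det_ne_zero (hR : 4 ≤ R) (hδ : δ * R ^ 4 ≤ 1)
    (h₁ : IsLineOfClass R δ (m + k) k A₁ B₁) (h₂ : IsLineOfClass R δ (m + k) k A₂ B₂)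
    (hz₁ : B₁ * z₁ = A₁ * θ + C₁) (hz₂ : B₂ * z₂ = A₂ * θ + C₂) (hne : z₁ ≠ z₂)
    (hclose : R ^ m * |z₁ - z₂| ≤ 4) : A₁ * B₂ - A₂ * B₁ ≠ 0 := by
  intro hdet
  have hsub := det_mul_sub hz₁ hz₂
  rw [hdet, Int.cast_zero, zero_mul, zero_sub, ← Int.cast_neg] at hsub
  set p : ℤ := -(C₂ * B₁ - C₁ * B₂)
  have hB : (0 : ℝ) < B₁ * B₂ := mul_pos h₁.cast_pos h₂.cast_pos
  have hdist : 0 < |z₁ - z₂| := abs_pos.2 (sub_ne_zero.2 hne)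
  have hp : |(p : ℝ)| < 1 := by
    rw [hsub, abs_mul, abs_of_pos hB]
    refine lt_of_mul_lt_mul_left (a := 4) ?_ (by norm_num)
    calc 4 * (B₁ * B₂ * |z₁ - z₂|) = 4 * (B₁ * B₂) * |z₁ - z₂| := by ring
      _ < R ^ m * |z₁ - z₂| := by gcongr; exact h₁.four_mul_mul_lt hR hδ h₂
      _ ≤ 4 * 1 := by linarith
  have hp₀ : p = 0 := Int.abs_lt_one_iff.1 (mod_cast hp)
  rw [hp₀, Int.cast_zero] at hsub
  exact mul_ne_zero hB.ne' (sub_ne_zero.2 hne) hsub.symm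

lemma IsLineOfClass.pow_three_lt (hR : 0 < R) (hδ₀ : 0 < δ) (hδ : δ * R ^ 10 ≤ 1) (hX₁ : 1 ≤ X)
    (hX : X ^ 4 = R ^ k) (h : IsLineOfClass R δ (m + k) k A B) {Q : ℝ} (hQ₀ : 0 ≤ Q)
    (hQ : Q * X ^ 6 < R ^ 2 * height A B ^ 2) : Q ^ 3 < δ * R ^ (2 * m + 2) := by
  have hH := h.height_pos
  refine lt_of_mul_lt_mul_right (a := X ^ 18) ?_ (by positivity)
  calc Q ^ 3 * X ^ 18 = (Q * X ^ 6) ^ 3 := by ring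
    _ < (R ^ 2 * height A B ^ 2) ^ 3 := by gcongr
    _ = R ^ 6 * (height A B ^ 3) ^ 2 := by ring
    _ ≤ R ^ 6 * (δ * R ^ (m + k + k + 3)) ^ 2 := by
        gcongr; exact (h.height_cube_lt hR).le
    _ = δ * R ^ 10 * (δ * R ^ (2 * m + 2) * (R ^ k) ^ 4) := by ring
    _ ≤ 1 * (δ * R ^ (2 * m + 2) * X ^ 18) := by
        rw [← hX, ← pow_mul]
        gcongr
        norm_num
    _ = δ * R ^ (2 * m + 2) * X ^ 18 := one_mul _

lemma IsLineOfClass.mul_sq_le (hR : 0 < R) (hX₁ : 1 ≤ X) (hX : X ^ 4 = R ^ k)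
    (h₁ : IsLineOfClass R δ (m + k) k A₁ B₁) (h₂ : IsLineOfClass R δ (m + k) k A₂ B₂) {Q : ℝ}
    (hQ : Q * X ^ 6 < R ^ 2 * height A₁ B₁ ^ 2) :
    Q * (height A₁ B₁ * B₂) ^ 2 ≤ δ ^ 2 * R ^ 8 * (R ^ m * X) ^ 2 := by
  have hB := h₂.cast_pos
  have hH₂ := h₂.mul_le_height
  rw [← hX] at hH₂
  refine le_of_mul_le_mul_right (a := X ^ 14) ?_ (by positivity)
  calc Q * (height A₁ B₁ * B₂) ^ 2 * X ^ 14
      = Q * X ^ 6 * height A₁ B₁ ^ 2 * (X ^ 4 * B₂) ^ 2 := by ring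
    _ ≤ R ^ 2 * height A₁ B₁ ^ 2 * height A₁ B₁ ^ 2 * height A₂ B₂ ^ 2 := by gcongr
    _ = R ^ 2 * (height A₁ B₁ ^ 4 * height A₂ B₂ ^ 2) := by ring
    _ ≤ R ^ 2 * (δ * R ^ (m + k + k + 3)) ^ 2 := by gcongr; exact h₁.pow_four_mul_sq_le hR h₂
    _ = δ ^ 2 * R ^ 8 * (R ^ m) ^ 2 * (R ^ k) ^ 4 := by ring
    _ = δ ^ 2 * R ^ 8 * (R ^ m * X) ^ 2 * X ^ 14 := by rw [← hX]; ring

lemma IsLineOfClass.mul_mul_sq_lt (hR : 5 ≤ R) (hδ₀ : 0 < δ) (hδ : δ * R ^ 10 ≤ 1) (hX₁ : 1 ≤ X)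
    (hX : X ^ 4 = R ^ k) (h₁ : IsLineOfClass R δ (m + k) k A₁ B₁)
    (h₂ : IsLineOfClass R δ (m + k) k A₂ B₂) {Q t : ℝ} (hQ₀ : 0 ≤ Q)
    (hQ : Q * X ^ 6 < R ^ 2 * height A₁ B₁ ^ 2) (ht : R ^ m * |t| ≤ 4) :
    Q * (B₁ * B₂ * t) ^ 2 < δ := by
  have hR' : (5 : ℝ) ≤ R := mod_cast hR
  have hB₁ := h₁.cast_pos
  have hB₂ := h₂.cast_pos
  have hH₁ := h₁.mul_le_height
  rw [← hX] at hH₁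
  have hXB : X * B₁ ≤ height A₁ B₁ := le_trans (by gcongr; exact le_self_pow₀ hX₁ (by norm_num)) hH₁
  refine lt_of_mul_lt_mul_right (a := X ^ 2) ?_ (by positivity)
  calc Q * (B₁ * B₂ * t) ^ 2 * X ^ 2 = Q * (X * B₁ * B₂) ^ 2 * |t| ^ 2 := by rw [sq_abs]; ring
    _ ≤ Q * (height A₁ B₁ * B₂) ^ 2 * |t| ^ 2 := by gcongr
    _ ≤ δ ^ 2 * R ^ 8 * (R ^ m * X) ^ 2 * |t| ^ 2 :=
        mul_le_mul_of_nonneg_right (h₁.mul_sq_le (by omega) hX₁ hX h₂ hQ) (sq_nonneg _)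
    _ = δ ^ 2 * R ^ 8 * (R ^ m * |t|) ^ 2 * X ^ 2 := by ring
    _ ≤ δ ^ 2 * R ^ 8 * 4 ^ 2 * X ^ 2 := by gcongr
    _ < δ ^ 2 * R ^ 8 * R ^ 2 * X ^ 2 := by gcongr; linarith
    _ = δ * R ^ 10 * (δ * X ^ 2) := by ring
    _ ≤ δ * X ^ 2 := mul_le_of_le_one_left (by positivity) hδ

lemma IsLineOfClass.one_le_mul_abs_sub (hR : 5 ≤ R) (hδ₀ : 0 < δ) (hδ : δ * R ^ 10 ≤ 1)
    (hX₁ : 1 ≤ X) (hX : X ^ 4 = R ^ k) (h₁ : IsLineOfClass R δ (m + k) k A₁ B₁)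
    (h₂ : IsLineOfClass R δ (m + k) k A₂ B₂) (hz₁ : B₁ * z₁ = A₁ * θ + C₁)
    (hz₂ : B₂ * z₂ = A₂ * θ + C₂) (hclose : R ^ m * |z₁ - z₂| ≤ 4)
    (hnear : IsNearSurvivor R (dangerous R δ θ) m z₁) (hdet : A₁ * B₂ - A₂ * B₁ ≠ 0)
    (hsmall : |((A₁ * B₂ - A₂ * B₁ : ℤ) : ℝ)| * X ^ 6 < R ^ 2 * height A₁ B₁ ^ 2) :
    1 ≤ X * (R ^ m * |z₁ - z₂|) := by
  have hδ₂ := mul_pow_le_one (by omega) hδ₀ hδ (i := 2) (by norm_num)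
  have hδ₈ := mul_pow_le_one (by omega) hδ₀ hδ (i := 8) (by norm_num)
  -- By the rule of Cramer, the lines meet in a rational point whose denominator is the determinant;
  -- its distances to the lines `x = θ` and `y = z₁` are multiples of `|z₁ - z₂|`.
  have hpoint := hnear.le_point (by omega) hδ₀ hδ₂ (p := C₂ * B₁ - C₁ * B₂)
    (r := A₁ * C₂ - A₂ * C₁) hdet
    (h₁.pow_three_lt (by omega) hδ₀ hδ hX₁ hX (abs_nonneg _) hsmall)
    (by
      rw [det_mul_sub hz₁ hz₂]
      exact h₁.mul_mul_sq_lt hR hδ₀ hδ hX₁ hX h₂ (abs_nonneg _) hsmall hclose)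
  rw [det_mul_left_sub hz₁ hz₂] at hpoint
  set Q : ℝ := |((A₁ * B₂ - A₂ * B₁ : ℤ) : ℝ)|
  have hB₂ := h₂.cast_pos
  have hsq : δ * 1 ≤ δ * (X * (R ^ m * |z₁ - z₂|)) ^ 2 := by
    calc δ * 1 ≤ Q * (|(A₁ : ℝ)| * B₂) ^ 2 * |z₁ - z₂| ^ 2 := by
          rw [mul_pow, sq_abs, sq_abs]
          linarith
      _ ≤ Q * (height A₁ B₁ * B₂) ^ 2 * |z₁ - z₂| ^ 2 := by gcongr; exact abs_le_height A₁ B₁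
      _ ≤ δ ^ 2 * R ^ 8 * (R ^ m * X) ^ 2 * |z₁ - z₂| ^ 2 :=
          mul_le_mul_of_nonneg_right (h₁.mul_sq_le (by omega) hX₁ hX h₂ hsmall) (sq_nonneg _)
      _ = δ * R ^ 8 * (δ * (X * (R ^ m * |z₁ - z₂|)) ^ 2) := by ring
      _ ≤ δ * (X * (R ^ m * |z₁ - z₂|)) ^ 2 := mul_le_of_le_one_left (by positivity) hδ₈
  exact (one_le_sq_iff₀ (by positivity)).1 (le_of_mul_le_mul_left hsq hδ₀)

lemma IsLineOfClass.mul_sq_le_abs_slope_sub (hR : 0 < R) (hX₁ : 1 ≤ X) (hX : X ^ 4 = R ^ k)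
    (h₁ : IsLineOfClass R δ n k A₁ B₁) (h₂ : IsLineOfClass R δ n k A₂ B₂)
    (hlarge : R ^ 2 * height A₁ B₁ ^ 2 ≤ |((A₁ * B₂ - A₂ * B₁ : ℤ) : ℝ)| * X ^ 6) :
    R * X ^ 2 ≤ |(A₁ : ℝ) / B₁ - A₂ / B₂| := by
  have hB₁ := h₁.cast_pos
  have hB₂ := h₂.cast_pos
  have hH₁ := h₁.mul_le_height
  have hH₂ := h₂.mul_le_height
  rw [← hX] at hH₁ hH₂
  have hpos := h₁.height_pos
  have hslope : (A₁ : ℝ) / B₁ - A₂ / B₂ = (A₁ * B₂ - A₂ * B₁ : ℤ) / (B₁ * B₂) := by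
    push_cast
    field_simp
  rw [hslope, abs_div, abs_of_pos (mul_pos hB₁ hB₂), le_div_iff₀ (mul_pos hB₁ hB₂)]
  refine le_of_mul_le_mul_right (a := X ^ 6) ?_ (by positivity)
  calc R * X ^ 2 * (B₁ * B₂) * X ^ 6 = R * (X ^ 4 * B₁) * (X ^ 4 * B₂) := by ring
    _ ≤ R * height A₁ B₁ * height A₂ B₂ := by gcongr
    _ ≤ R * height A₁ B₁ * (R * height A₁ B₁) := by
        gcongr; exact (h₁.height_lt_mul_height hR h₂).le
    _ = R ^ 2 * height A₁ B₁ ^ 2 := by ring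
    _ ≤ _ := hlarge

lemma IsLineOfClass.gap (hR : 5 ≤ R) (hδ₀ : 0 < δ) (hδ : δ * R ^ 10 ≤ 1)
    (hX₁ : 1 ≤ X) (hX : X ^ 4 = R ^ k) (h₁ : IsLineOfClass R δ (m + k) k A₁ B₁)
    (h₂ : IsLineOfClass R δ (m + k) k A₂ B₂) (hz₁ : B₁ * z₁ = A₁ * θ + C₁)
    (hz₂ : B₂ * z₂ = A₂ * θ + C₂) (hne : z₁ ≠ z₂) (hclose : R ^ m * |z₁ - z₂| ≤ 4)
    (hnear : IsNearSurvivor R (dangerous R δ θ) m z₁) :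
    1 ≤ X * (R ^ m * |z₁ - z₂|) ∨ R * X ^ 2 ≤ |(A₁ : ℝ) / B₁ - A₂ / B₂| :=
  (lt_or_ge _ _).imp
    (h₁.one_le_mul_abs_sub hR hδ₀ hδ hX₁ hX h₂ hz₁ hz₂ hclose hnear
      (h₁.det_ne_zero (by omega) (mul_pow_le_one (by omega) hδ₀ hδ (by norm_num))
        h₂ hz₁ hz₂ hne hclose))
    (h₁.mul_sq_le_abs_slope_sub (by omega) hX₁ hX h₂)

end LineGap

section PointGap

variable {R : ℕ} {δ θ : ℝ} {n : ℕ} {p q p₁ q₁ r₁ p₂ q₂ r₂ : ℤ} {z₁ z₂ : ℝ}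

lemma IsPointOfClass.cast_pos (h : IsPointOfClass R δ θ n p q) : (0 : ℝ) < q := mod_cast h.pos

lemma IsPointOfClass.lt_mul (hR : 0 < R) (h₁ : IsPointOfClass R δ θ n p₁ q₁)
    (h₂ : IsPointOfClass R δ θ n p₂ q₂) : (q₂ : ℝ) < R * q₁ := by
  refine lt_mul_of_pow_three_lt (mod_cast hR) h₁.cast_pos.le ?_
  calc (q₂ : ℝ) ^ 3 < δ * R ^ (2 * n + 4) := h₂.cube_lt
    _ = R ^ 2 * (δ * R ^ (2 * n + 2)) := by ring
    _ ≤ R ^ 2 * (q₁ : ℝ) ^ 3 := by gcongr; exact h₁.le_cube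

lemma IsPointOfClass.mul_mul_sq_le (hR : 0 < R) (hδ₀ : 0 < δ)
    (h₁ : IsPointOfClass R δ θ n p₁ q₁) (h₂ : IsPointOfClass R δ θ n p₂ q₂)
    {t : ℝ} (ht : R ^ n * |t| ≤ 1) :
    (q₁ * q₂ * t) ^ 2 ≤ R ^ 6 * δ * q₁ := by
  have hq₁ := h₁.cast_pos
  have hq₂ := h₂.cast_pos
  calc (q₁ * q₂ * t) ^ 2 ≤ (q₁ * (R * q₁) * t) ^ 2 := by
        rw [mul_pow, mul_pow (_ * _)]
        gcongr
        exact (h₁.lt_mul hR h₂).le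
    _ = R ^ 2 * q₁ * t ^ 2 * (q₁ : ℝ) ^ 3 := by ring
    _ ≤ R ^ 2 * q₁ * t ^ 2 * (δ * R ^ (2 * n + 4)) := by gcongr; exact h₁.cube_lt.le
    _ = R ^ 6 * δ * q₁ * (R ^ n * |t|) ^ 2 := by rw [mul_pow, sq_abs]; ring
    _ ≤ R ^ 6 * δ * q₁ := mul_le_of_le_one_right (by positivity) (pow_le_one₀ (by positivity) ht)

lemma IsPointOfClass.sub_sq_le (hR : 1 < R) (hδ₀ : 0 < δ) (h₁ : IsPointOfClass R δ θ n p₁ q₁)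
    (h₂ : IsPointOfClass R δ θ n p₂ q₂) :
    ((p₁ * q₂ - q₁ * p₂ : ℤ) : ℝ) ^ 2 ≤ R ^ 6 * δ * q₁ := by
  have hR' : (2 : ℝ) ≤ R := mod_cast hR
  have hq₁ := h₁.cast_pos
  have hq₂ := h₂.cast_pos
  set u₁ : ℝ := q₁ * θ - p₁
  set u₂ : ℝ := q₂ * θ - p₂
  have hu₂ : (q₁ * u₂) ^ 2 ≤ R * (δ * q₁) := by
    calc (q₁ * u₂) ^ 2 = q₁ * u₂ ^ 2 * q₁ := by ring
      _ ≤ R * q₂ * u₂ ^ 2 * q₁ := by gcongr; exact (h₂.lt_mul (by omega) h₁).le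
      _ = R * (q₂ * u₂ ^ 2) * q₁ := by ring
      _ ≤ R * δ * q₁ := by gcongr; exact h₂.mul_sq_lt.le
      _ = R * (δ * q₁) := mul_assoc _ _ _
  have hu₁ : (q₂ * u₁) ^ 2 ≤ R ^ 2 * (δ * q₁) := by
    calc (q₂ * u₁) ^ 2 ≤ (R * q₁ * u₁) ^ 2 := by
          rw [mul_pow, mul_pow (_ * _)]
          gcongr
          exact (h₁.lt_mul (by omega) h₂).le
      _ = R ^ 2 * (q₁ * u₁ ^ 2) * q₁ := by ring
      _ ≤ R ^ 2 * δ * q₁ := by gcongr; exact h₁.mul_sq_lt.le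
      _ = R ^ 2 * (δ * q₁) := mul_assoc _ _ _
  calc ((p₁ * q₂ - q₁ * p₂ : ℤ) : ℝ) ^ 2 = (q₁ * u₂ + -(q₂ * u₁)) ^ 2 := by push_cast; ring
    _ ≤ 2 * ((q₁ * u₂) ^ 2 + (-(q₂ * u₁)) ^ 2) := add_sq_le
    _ = 2 * ((q₁ * u₂) ^ 2 + (q₂ * u₁) ^ 2) := by rw [neg_sq]
    _ ≤ 2 * (R + R ^ 2) * (δ * q₁) := by linarith
    _ ≤ R ^ 6 * (δ * q₁) := by
        have h₁₂ : (2 : ℝ) * R ≤ R ^ 2 := by nlinarith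
        have h₂₃ : (2 : ℝ) * R ^ 2 ≤ R ^ 3 := by nlinarith [sq_nonneg (R : ℝ)]
        have h₃₄ : (2 : ℝ) * R ^ 3 ≤ R ^ 4 := by nlinarith [pow_pos (a := (R : ℝ)) (by linarith) 3]
        have h₄₆ : (R : ℝ) ^ 4 ≤ R ^ 6 := pow_le_pow_right₀ (by linarith) (by norm_num)
        gcongr
        linarith [sq_nonneg (R : ℝ)]
    _ = R ^ 6 * δ * q₁ := by ring

lemma IsPointOfClass.abs_mul_lt (hR : 1 < R) (hδ₀ : 0 < δ) (hδ : δ * R ^ 10 ≤ 1)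
    (h : IsPointOfClass R δ θ n p q) {a x t : ℝ} (hx : q * x = a * (q * θ - p))
    (ha : a ^ 2 ≤ R ^ 6 * δ * q) (ht₀ : 0 ≤ t) (ht : t ≤ R ^ 6 * δ * q) : |x| * t < δ := by
  have hR' : (1 : ℝ) < R := mod_cast hR
  have hq := h.cast_pos
  have hδ₉ : δ * R ^ 9 < 1 :=
    (mul_lt_mul_of_pos_left (pow_lt_pow_right₀ hR' (by norm_num)) hδ₀).trans_le hδ
  refine lt_of_pow_lt_pow_left₀ 2 hδ₀.le
    (lt_of_mul_lt_mul_right (a := (q : ℝ) ^ 3) ?_ (by positivity))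
  calc (|x| * t) ^ 2 * (q : ℝ) ^ 3 = (q * x) ^ 2 * q * t ^ 2 := by rw [mul_pow, sq_abs]; ring
    _ = a ^ 2 * (q * (q * θ - p) ^ 2) * t ^ 2 := by rw [hx]; ring
    _ ≤ R ^ 6 * δ * q * δ * (R ^ 6 * δ * q) ^ 2 := by gcongr; exact h.mul_sq_lt.le
    _ = (δ * R ^ 9) ^ 2 * (δ ^ 2 * (q : ℝ) ^ 3) := by ring
    _ < 1 * (δ ^ 2 * (q : ℝ) ^ 3) := by gcongr; exact pow_lt_one₀ (by positivity) hδ₉ two_ne_zero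
    _ = δ ^ 2 * (q : ℝ) ^ 3 := one_mul _

lemma IsPointOfClass.abs_mul_lt_pow (hR : 0 < R) (hδ₀ : 0 < δ) (hδ : δ * R ^ 10 ≤ 1)
    (h : IsPointOfClass R δ θ n p q) {x t : ℝ} (hx : x ^ 2 ≤ R ^ 6 * δ * q) (ht₀ : 0 ≤ t)
    (ht : t ≤ R ^ 6 * δ * q) : |x| * t < δ * R ^ (n + 1) := by
  have : (0 : ℝ) < R := mod_cast hR
  have hq := h.cast_pos
  refine lt_of_pow_lt_pow_left₀ 2 (by positivity) ?_
  calc (|x| * t) ^ 2 = x ^ 2 * t ^ 2 := by rw [mul_pow, sq_abs]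
    _ ≤ R ^ 6 * δ * q * (R ^ 6 * δ * q) ^ 2 := by gcongr
    _ = R ^ 18 * δ ^ 3 * (q : ℝ) ^ 3 := by ring
    _ < R ^ 18 * δ ^ 3 * (δ * R ^ (2 * n + 4)) := by gcongr; exact h.cube_lt
    _ = (δ * R ^ 10) ^ 2 * (δ * R ^ (n + 1)) ^ 2 := by ring
    _ ≤ (δ * R ^ (n + 1)) ^ 2 :=
        mul_le_of_le_one_left (by positivity) (pow_le_one₀ (by positivity) hδ)

lemma IsPointOfClass.gap (hR : 1 < R) (hδ₀ : 0 < δ) (hδ : δ * R ^ 10 ≤ 1)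
    (hθ : ∀ A C : ℤ, A ≠ 0 → δ ≤ |A * θ + C| * (A : ℝ) ^ 2)
    (h₁ : IsPointOfClass R δ θ n p₁ q₁) (h₂ : IsPointOfClass R δ θ n p₂ q₂)
    (hz₁ : q₁ * z₁ = r₁) (hz₂ : q₂ * z₂ = r₂) (hne : z₁ ≠ z₂)
    (hnear : IsNearSurvivor R (dangerous R δ θ) n z₁) : 1 < R ^ n * |z₁ - z₂| := by
  by_contra! hclose
  have hδ₂ := mul_pow_le_one (by omega) hδ₀ hδ (i := 2) (by norm_num)
  -- `A x - B y + C = 0` is the line through the two points.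
  obtain ⟨A, hA⟩ : ∃ A : ℤ, A = r₁ * q₂ - q₁ * r₂ := ⟨_, rfl⟩
  obtain ⟨B, hB⟩ : ∃ B : ℤ, B = p₁ * q₂ - q₁ * p₂ := ⟨_, rfl⟩
  obtain ⟨C, hC⟩ : ∃ C : ℤ, C = p₁ * r₂ - r₁ * p₂ := ⟨_, rfl⟩
  have hline : (A : ℝ) * p₁ - B * r₁ + C * q₁ = 0 := by
    rw [hA, hB, hC]
    push_cast
    ring
  have hA' : (A : ℝ) = q₁ * q₂ * (z₁ - z₂) := by
    rw [hA]
    push_cast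
    linear_combination -q₂ * hz₁ + q₁ * hz₂
  have hA₀ : A ≠ 0 := by
    rw [← Int.cast_ne_zero (α := ℝ), hA']
    exact mul_ne_zero (mul_pos h₁.cast_pos h₂.cast_pos).ne' (sub_ne_zero.2 hne)
  have hAsq : (A : ℝ) ^ 2 ≤ R ^ 6 * δ * q₁ := hA' ▸ h₁.mul_mul_sq_le (by omega) hδ₀ h₂ hclose
  have hBsq : (B : ℝ) ^ 2 ≤ R ^ 6 * δ * q₁ := hB ▸ h₁.sub_sq_le hR hδ₀ h₂
  have hHsq : height A B ^ 2 ≤ R ^ 6 * δ * q₁ := height_sq A B ▸ max_le hAsq hBsq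
  rcases eq_or_ne B 0 with rfl | hB₀
  · rw [Int.cast_zero] at hline
    refine absurd (hθ A C hA₀) (not_le.2 (h₁.abs_mul_lt hR hδ₀ hδ ?_ hAsq (sq_nonneg _) hAsq))
    linear_combination hline
  · refine absurd (hnear.le_line hR hδ₀ hδ₂ hB₀ (C := C)
      (h₁.abs_mul_lt_pow (by omega) hδ₀ hδ hBsq (sq_nonneg _) hHsq))
      (not_le.2 (h₁.abs_mul_lt hR hδ₀ hδ ?_ hAsq (sq_nonneg _) hHsq))
    linear_combination hline - B * hz₁

end PointGap

section Counting

variable {R : ℕ} {δ θ : ℝ} {m k b : ℕ}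

lemma card_lineOrdinates_le (hR : 5 ≤ R) (hδ₀ : 0 < δ) (hδ : δ * R ^ 10 ≤ 1) {X : ℕ} (hX₁ : 1 ≤ X)
    (hX : X ^ 4 = R ^ k) (hb : b ∈ survivors R (IsHit R (dangerous R δ θ)) m) {s : Finset ℝ}
    (hs : ∀ z ∈ s, z ∈ lineOrdinates R δ θ (m + k) k ∧ |(R : ℝ) ^ m * z - b| ≤ 2) :
    s.card ≤ 10 * X ^ 3 := by
  have hR' : (0 : ℝ) < R := mod_cast (by omega : 0 < R)
  have hX₁' : (1 : ℝ) ≤ X := mod_cast hX₁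
  have hX' : (X : ℝ) ^ 4 = R ^ k := mod_cast hX
  choose! A B C hclass hz using fun z hzs => (hs z hzs).1
  have hclose : ∀ z ∈ s, ∀ w ∈ s, R ^ m * |z - w| ≤ 4 := by
    intro z hzs w hws
    rw [← abs_of_pos (pow_pos hR' m), ← abs_mul, mul_sub]
    have := abs_sub_le ((R : ℝ) ^ m * z) b (R ^ m * w)
    linarith [(hs z hzs).2, abs_sub_comm (b : ℝ) (R ^ m * w), (hs w hws).2]
  have hordinate : ∀ z ∈ s, X * (R ^ m * z) ∈
      Set.Ico ((X : ℝ) * (b - 2)) (X * (b - 2) + (4 * X + 1 : ℕ)) := by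
    intro z hzs
    obtain ⟨h₁, h₂⟩ := abs_le.1 (hs z hzs).2
    push_cast
    constructor <;> nlinarith
  have hslope : ∀ z ∈ s, (A z : ℝ) / B z / (R * X ^ 2) ∈
      Set.Ico (-(X : ℝ) ^ 2) (-X ^ 2 + (2 * X ^ 2 : ℕ)) := by
    intro z hzs
    have hB := (hclass z hzs).cast_pos
    have habs : |(A z : ℝ) / B z / (R * X ^ 2)| < X ^ 2 := by
      rw [abs_div, abs_div, abs_of_pos hB, abs_of_pos (by positivity : (0 : ℝ) < R * X ^ 2),
        div_div, div_lt_iff₀ (by positivity)]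
      calc |(A z : ℝ)| ≤ height (A z) (B z) := abs_le_height _ _
        _ < R ^ (k + 1) * B z := (hclass z hzs).height_lt_mul
        _ = X ^ 2 * (B z * (R * X ^ 2)) := by rw [pow_succ, ← hX']; ring
    push_cast
    constructor <;> linarith [abs_lt.1 habs]
  have hcard := card_le_mul_of_one_le_abs_sub hordinate hslope fun z hzs w hws hne => by
    rw [← mul_sub, ← mul_sub, abs_mul, abs_mul, abs_of_pos (by positivity : (0 : ℝ) < X),
      abs_of_pos (pow_pos hR' m), ← sub_div, abs_div,
      abs_of_pos (by positivity : (0 : ℝ) < R * X ^ 2), one_le_div (by positivity)]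
    exact (hclass z hzs).gap hR hδ₀ hδ hX₁' hX' (hclass w hws) (hz z hzs) (hz w hws) hne
      (hclose z hzs w hws) ⟨b, hb, (hs z hzs).2⟩
  calc s.card ≤ (4 * X + 1) * (2 * X ^ 2) := hcard
    _ ≤ (4 * X + X) * (2 * X ^ 2) := by gcongr
    _ = 10 * X ^ 3 := by ring

lemma card_pointOrdinates_le (hR : 1 < R) (hδ₀ : 0 < δ) (hδ : δ * R ^ 10 ≤ 1)
    (hθ : ∀ A C : ℤ, A ≠ 0 → δ ≤ |A * θ + C| * (A : ℝ) ^ 2)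
    (hb : b ∈ survivors R (IsHit R (dangerous R δ θ)) m) {s : Finset ℝ}
    (hs : ∀ z ∈ s, z ∈ pointOrdinates R δ θ m ∧ |(R : ℝ) ^ m * z - b| ≤ 2) : s.card ≤ 5 := by
  have hR' : (0 : ℝ) < R := mod_cast (by omega : 0 < R)
  choose! p r q hclass hz using fun z hzs => (hs z hzs).1
  have hordinate : ∀ z ∈ s, R ^ m * z ∈ Set.Ico ((b : ℝ) - 2) (b - 2 + (5 : ℕ)) := by
    intro z hzs
    push_cast
    constructor <;> linarith [abs_le.1 (hs z hzs).2]
  have htrivial : ∀ z ∈ s, (0 : ℝ) ∈ Set.Ico (0 : ℝ) (0 + (1 : ℕ)) := fun z _ => by norm_num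
  refine (card_le_mul_of_one_le_abs_sub hordinate htrivial fun z hzs w hws hne => Or.inl ?_).trans
    (by norm_num)
  rw [← mul_sub, abs_mul, abs_of_pos (pow_pos hR' m)]
  exact ((hclass z hzs).gap hR hδ₀ hδ hθ (hclass w hws) (hz z hzs) (hz w hws) hne
    ⟨b, hb, (hs z hzs).2⟩).le

open Classical in
lemma card_filter_isHit_dangerous_le (hR : 5 ≤ R) (hδ₀ : 0 < δ) (hδ : δ * R ^ 10 ≤ 1)
    (hθ : ∀ A C : ℤ, A ≠ 0 → δ ≤ |A * θ + C| * (A : ℝ) ^ 2) {X : ℕ} (hX₁ : 1 ≤ X)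
    (hX : X ^ 4 = R ^ k) (hb : b ∈ survivors R (IsHit R (dangerous R δ θ)) m) :
    ((block (R ^ (k + 1)) b).filter (IsHit R (dangerous R δ θ) (m + k) k)).card ≤
      135 * X ^ 3 := by
  refine (card_filter_isHit_le (N := 15 * X ^ 3) (by omega) fun s hs => ?_).trans (by omega)
  have hline : (s.filter (· ∈ lineOrdinates R δ θ (m + k) k)).card ≤ 10 * X ^ 3 :=
    card_lineOrdinates_le hR hδ₀ hδ hX₁ hX hb fun z hz =>
      ⟨(Finset.mem_filter.1 hz).2, (hs z (Finset.mem_filter.1 hz).1).2⟩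
  have hpoint : (s.filter (· ∉ lineOrdinates R δ θ (m + k) k)).card ≤ 5 := by
    have hmem : ∀ z ∈ s.filter (· ∉ lineOrdinates R δ θ (m + k) k),
        k = 0 ∧ z ∈ pointOrdinates R δ θ (m + k) := fun z hz =>
      (hs z (Finset.mem_filter.1 hz).1).1.resolve_left (Finset.mem_filter.1 hz).2
    rcases Finset.eq_empty_or_nonempty (s.filter (· ∉ lineOrdinates R δ θ (m + k) k)) with h | h
    · rw [h]
      exact Nat.zero_le 5
    · obtain ⟨z, hz⟩ := h
      obtain rfl := (hmem z hz).1
      exact card_pointOrdinates_le (by omega) hδ₀ hδ hθ hb fun w hw =>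
        ⟨(hmem w hw).2, (hs w (Finset.mem_filter.1 hw).1).2⟩
  have hX₃ : 1 ≤ X ^ 3 := Nat.one_le_pow _ _ hX₁
  rw [← Finset.card_filter_add_card_filter_not (· ∈ lineOrdinates R δ θ (m + k) k)]
  omega

end Counting

-- `R = 5 ^ 4` makes `X = R ^ (k / 4)` an integer and is large enough for the losses, of total
-- weight `∑ 135 (2 / 5) ^ k = 225`, not to exceed `R / 2`.
lemma exists_forall_isNearSurvivor {δ θ : ℝ} (hδ₀ : 0 < δ) (hδ : δ * (625 : ℕ) ^ 10 ≤ 1)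
    (hθ : ∀ A C : ℤ, A ≠ 0 → δ ≤ |A * θ + C| * (A : ℝ) ^ 2) :
    ∃ y, ∀ m, IsNearSurvivor 625 (dangerous 625 δ θ) m y := by
  classical
  have hX (k : ℕ) : (5 ^ k) ^ 4 = 625 ^ k := by rw [pow_right_comm]; norm_num
  have hsum (n : ℕ) : ∑ k ∈ Finset.range (n + 1), (135 * (5 ^ k) ^ 3 : ℝ) / (625 / 2) ^ k ≤
      (625 : ℕ) - 625 / 2 := by
    have hterm (k : ℕ) : (135 * (5 ^ k) ^ 3 : ℝ) / (625 / 2) ^ k = 135 * (2 / 5) ^ k := by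
      rw [← pow_mul, mul_comm k, pow_mul, mul_div_assoc, ← div_pow]
      norm_num
    have hgeom : ∑ k ∈ Finset.range (n + 1), (2 / 5 : ℝ) ^ k ≤ (1 - 2 / 5)⁻¹ :=
      sum_le_hasSum _ (fun k _ => by positivity)
        (hasSum_geometric_of_lt_one (by norm_num) (by norm_num))
    simp_rw [hterm, ← Finset.mul_sum]
    norm_num at hgeom ⊢
    linarith
  obtain ⟨y, hy⟩ := exists_forall_mem_survivors_abs_sub_le (by norm_num) <|
    survivors_nonempty (R := 625) (by norm_num) (c := 625 / 2) (by norm_num) (fun m k b hb => by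
      exact_mod_cast card_filter_isHit_dangerous_le (by norm_num) hδ₀ hδ hθ (Nat.one_le_pow k 5
        (by norm_num)) (hX k) hb) hsum
  exact ⟨y, fun m => (hy m).imp fun b hb => ⟨hb.1, hb.2.trans one_le_two⟩⟩

lemma le_abs_mul_sq_of_forall_le_nint {δ θ : ℝ}
    (hθ : ∀ q : ℕ, 0 < q → δ ≤ (q : ℝ) ^ 2 * nint (q * θ)) (A C : ℤ) (hA : A ≠ 0) :
    δ ≤ |A * θ + C| * (A : ℝ) ^ 2 := by
  have hpos : ∀ A C : ℤ, 0 < A → δ ≤ |A * θ + C| * (A : ℝ) ^ 2 := by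
    intro A C hA
    lift A to ℕ using hA.le
    have hround := round_le ((A : ℝ) * θ) (-C)
    rw [Int.cast_neg, sub_neg_eq_add] at hround
    calc δ ≤ (A : ℝ) ^ 2 * nint (A * θ) := hθ A (by omega)
      _ ≤ (A : ℝ) ^ 2 * |A * θ + C| := by gcongr; exact hround
      _ = |(A : ℤ) * θ + C| * ((A : ℤ) : ℝ) ^ 2 := by rw [Int.cast_natCast, mul_comm]
  rcases lt_or_gt_of_ne hA with h | h
  · have hneg := hpos (-A) (-C) (by omega)
    rwa [Int.cast_neg, Int.cast_neg, neg_sq, neg_mul, ← neg_add, abs_neg] at hneg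
  · exact hpos A C h

lemma exists_lt_mul_pow {δ r : ℝ} (hδ : 0 < δ) (hr : 1 < r) (t : ℝ) : ∃ n : ℕ, t < δ * r ^ n := by
  obtain ⟨n, hn⟩ := pow_unbounded_of_one_lt (t / δ) hr
  exact ⟨n, (div_lt_iff₀' hδ).1 hn⟩

section Conclusion

variable {R : ℕ} {δ θ y : ℝ}

lemma le_nint_mul_of_forall_isNearSurvivor (hR : 1 < R) (hδ₀ : 0 < δ) (hδ : δ * R ^ 2 ≤ 1)
    (hθ : ∀ A C : ℤ, A ≠ 0 → δ ≤ |A * θ + C| * (A : ℝ) ^ 2)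
    (hy : ∀ m, IsNearSurvivor R (dangerous R δ θ) m y) {A B : ℤ} (hAB : 0 < max |A| |B|) :
    δ ≤ nint (A * θ - B * y) * max ((A : ℝ) ^ 2) ((B : ℝ) ^ 2) := by
  have hR' : (1 : ℝ) < R := mod_cast hR
  obtain ⟨C, hC⟩ : ∃ C : ℤ, nint (A * θ - B * y) = |A * θ - B * y + C| :=
    ⟨-round (A * θ - B * y), by rw [nint, Int.cast_neg, sub_eq_add_neg]⟩
  rw [hC]
  rcases eq_or_ne B 0 with rfl | hB
  · have hA : A ≠ 0 := by simpa using hAB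
    refine (hθ A C hA).trans ?_
    rw [Int.cast_zero, zero_mul, sub_zero]
    gcongr
    exact le_max_left _ _
  · obtain ⟨n, hn⟩ := exists_lt_mul_pow hδ₀ hR' (|(B : ℝ)| * height A B ^ 2)
    rw [← height_sq]
    refine (hy n).le_line hR hδ₀ hδ hB (hn.trans ?_)
    gcongr
    exact Nat.lt_succ_self n

lemma sqrt_le_sqrt_mul_nint {δ x : ℝ} {q : ℕ} (h : δ ≤ q * (q * x - round (q * x)) ^ 2) :
    √δ ≤ √q * nint (q * x) := by
  rw [nint, ← Real.sqrt_sq_eq_abs, ← Real.sqrt_mul (Nat.cast_nonneg q)]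
  exact Real.sqrt_le_sqrt h

lemma sqrt_le_of_forall_isNearSurvivor (hR : 1 < R) (hδ₀ : 0 < δ) (hδ : δ * R ^ 2 ≤ 1)
    (hy : ∀ m, IsNearSurvivor R (dangerous R δ θ) m y) {q : ℕ} (hq : 0 < q) :
    √δ ≤ √q * max (nint (q * θ)) (nint (q * y)) := by
  have hR' : (1 : ℝ) < R := mod_cast hR
  rcases le_or_gt δ (q * (q * θ - round (q * θ)) ^ 2) with h | h
  · refine (sqrt_le_sqrt_mul_nint h).trans ?_
    gcongr
    exact le_max_left _ _
  · obtain ⟨n, hn⟩ := exists_lt_mul_pow hδ₀ hR' ((q : ℝ) ^ 3)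
    have hpoint := (hy n).le_point_of_pos hR hδ₀ hδ (p := round (q * θ)) (r := round (q * y))
      (q := q) (by omega)
      (hn.trans (mul_lt_mul_of_pos_left (pow_lt_pow_right₀ hR' (by omega)) hδ₀)) h
    refine (sqrt_le_sqrt_mul_nint hpoint).trans ?_
    gcongr
    exact le_max_right _ _

end Conclusion

theorem stmt2_general (δ : ℝ) (hδ0 : 0 < δ) (hδ : δ ≤ 1 / 5 ^ 40) (θ₁ : ℝ)
    (hθ₁ : ∀ q : ℕ, 0 < q → δ ≤ (q : ℝ) ^ 2 * nint (q * θ₁)) :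
    ∃ θ₂ : ℝ,
      (∀ A B : ℤ, 0 < max |A| |B| →
        δ ≤ nint (A * θ₁ - B * θ₂) * max ((A : ℝ) ^ 2) ((B : ℝ) ^ 2)) ∧
      ∀ q : ℕ, 0 < q → √δ ≤ √q * max (nint (q * θ₁)) (nint (q * θ₂)) := by
  have hδ' : δ * (625 : ℕ) ^ 10 ≤ 1 := by
    rw [le_div_iff₀ (by positivity)] at hδ
    exact le_trans (by norm_num) hδ
  have hδ₂ := mul_pow_le_one (by norm_num) hδ0 hδ' (i := 2) (by norm_num)
  have hθ := le_abs_mul_sq_of_forall_le_nint hθ₁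
  obtain ⟨θ₂, hθ₂⟩ := exists_forall_isNearSurvivor hδ0 hδ' hθ
  exact ⟨θ₂, fun _ _ => le_nint_mul_of_forall_isNearSurvivor (by norm_num) hδ0 hδ₂ hθ hθ₂,
    fun _ => sqrt_le_of_forall_isNearSurvivor (by norm_num) hδ0 hδ₂ hθ₂⟩

/-- Quantitative version of Badziahin–Pollington–Velani. -/
theorem stmt2 (δ : ℝ) (hδ0 : 0 < δ) (hδ : δ ≤ 1 / 2 ^ 1622) (θ₁ : ℝ)
    (hθ₁ : ∀ q : ℕ, 0 < q → δ ≤ (q : ℝ) ^ 2 * nint (q * θ₁)) :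
    ∃ θ₂ : ℝ,
      (∀ A B : ℤ, 0 < max |A| |B| →
        δ ≤ nint (A * θ₁ - B * θ₂) * max ((A : ℝ) ^ 2) ((B : ℝ) ^ 2)) ∧
      (∃ c : ℝ, 0 < c ∧ ∀ q : ℕ, 0 < q →
        c ≤ Real.sqrt q * max (nint (q * θ₁)) (nint (q * θ₂))) := by
  have hpow : (5 : ℝ) ^ 40 ≤ 2 ^ 1622 :=
    le_trans (b := 2 ^ 100) (by norm_num) (pow_le_pow_right₀ one_le_two (by norm_num))
  obtain ⟨θ₂, hline, hpoint⟩ := stmt2_general δ hδ0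
    (hδ.trans (one_div_le_one_div_of_le (by positivity) hpow)) θ₁ hθ₁
  exact ⟨θ₂, hline, √δ, Real.sqrt_pos.2 hδ0, hpoint⟩
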